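/- Assume the standing assumptions (B) and fix α ∈ C(Ω̄;𝕊ⁿ(θ₀)). For any r ∈ (0, r₀) there exist a function v_r ∈ C²(Ω̄) and a constant η ∈ (0,1) such that: H_α(x, Dv_r(x)) ≤ −η for all x ∈ Ω \ B_r; H_α(x, Dv_r(x)) ≤ 1 for all x ∈ B_r; and ‖v_r − V_α‖_{L^∞(Ω)} < r. -/

import Mathlib

open Set Filter Metric Topology
open scoped ENNReal

noncomputable section

/-- `n`-dimensional Euclidean space. -/
abbrev Eu (n : ℕ) := EuclideanSpace ℝ (Fin n)

variable {n : ℕ}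

/-- Euclidean dot product. -/
def dotp (x y : Eu n) : ℝ := ∑ i, x i * y i

/-- The quadratic form `A p · p` of a matrix `A`. -/
def mquad (A : Matrix (Fin n) (Fin n) ℝ) (p : Eu n) : ℝ := ∑ i, ∑ j, A i j * p i * p j

/-- `A ∈ 𝕊ⁿ(θ)`: symmetric with `θ I ≤ A ≤ θ⁻¹ I`. -/
def memS (θ : ℝ) (A : Matrix (Fin n) (Fin n) ℝ) : Prop :=
  A.IsSymm ∧ ∀ p : Eu n, θ * ‖p‖ ^ 2 ≤ mquad A p ∧ mquad A p ≤ θ⁻¹ * ‖p‖ ^ 2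

/-- order of symmetric matrices (via quadratic forms). -/
def mle (A B : Matrix (Fin n) (Fin n) ℝ) : Prop := ∀ p : Eu n, mquad A p ≤ mquad B p

/-- trace of the product `A·H`. -/
def trMul (A H : Matrix (Fin n) (Fin n) ℝ) : ℝ := ∑ i, ∑ j, A i j * H j i

/-- the Pucci maximal operator associated with `𝕊ⁿ(θ)`. -/
def pucci (θ : ℝ) (X : Matrix (Fin n) (Fin n) ℝ) : ℝ :=
  sSup ((fun A => trMul A X) '' {A | memS θ A})

/-- time derivative of `u(x,t)`. -/
def tD (u : Eu n → ℝ → ℝ) (x : Eu n) (t : ℝ) : ℝ := deriv (u x) t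

/-- spatial gradient of `u(x,t)`. -/
def sG (u : Eu n → ℝ → ℝ) (x : Eu n) (t : ℝ) : Eu n := gradient (fun y => u y t) x

/-- spatial Hessian matrix of `u(x,t)`. -/
def sH (u : Eu n → ℝ → ℝ) (x : Eu n) (t : ℝ) : Matrix (Fin n) (Fin n) ℝ :=
  fun i j => fderiv ℝ (fun y => sG u y t i) x (EuclideanSpace.single j 1)

/-- Hessian matrix of a static function. -/
def hessS (v : Eu n → ℝ) (x : Eu n) : Matrix (Fin n) (Fin n) ℝ :=
  fun i j => fderiv ℝ (fun y => gradient v y i) x (EuclideanSpace.single j 1)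

/-- closed parabolic cylinder `Q̄_T = closure Ω × [0,T]` (with `T ∈ (0,∞]`). -/
def cylC (Ω : Set (Eu n)) (T : ℝ≥0∞) : Set (Eu n × ℝ) :=
  {p | p.1 ∈ closure Ω ∧ 0 ≤ p.2 ∧ ENNReal.ofReal p.2 ≤ T}

/-- open parabolic cylinder `Q_T = Ω × (0,T)`. -/
def cylO (Ω : Set (Eu n)) (T : ℝ≥0∞) : Set (Eu n × ℝ) :=
  {p | p.1 ∈ Ω ∧ 0 < p.2 ∧ ENNReal.ofReal p.2 < T}

/-- `u ∈ C^{2,1}(Q_T)`. -/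
def C21 (u : Eu n → ℝ → ℝ) (Ω : Set (Eu n)) (T : ℝ≥0∞) : Prop :=
  (∀ x ∈ Ω, ∀ t : ℝ, 0 < t → ENNReal.ofReal t < T →
     ContDiffAt ℝ 2 (fun y => u y t) x ∧ DifferentiableAt ℝ (u x) t) ∧
  ContinuousOn (fun p : Eu n × ℝ => tD u p.1 p.2) (cylO Ω T) ∧
  ContinuousOn (fun p : Eu n × ℝ => sH u p.1 p.2) (cylO Ω T)

/-- `u ∈ C(Q̄_T) ∩ C^{2,1}(Q_T)`. -/
def Classical21 (u : Eu n → ℝ → ℝ) (Ω : Set (Eu n)) (T : ℝ≥0∞) : Prop :=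
  ContinuousOn (fun p : Eu n × ℝ => u p.1 p.2) (cylC Ω T) ∧ C21 u Ω T

/-- a coefficient field in `C(Q̄_T; 𝕊ⁿ(θ))`. -/
def MatC (θ : ℝ) (A : Eu n → ℝ → Matrix (Fin n) (Fin n) ℝ) (Ω : Set (Eu n))
    (T : ℝ≥0∞) : Prop :=
  ContinuousOn (fun p : Eu n × ℝ => A p.1 p.2) (cylC Ω T) ∧
  ∀ p ∈ cylC Ω T, memS θ (A p.1 p.2)

/-- `u` is a classical solution of `u_t = ε tr[A D²u] + b·Du` in `Q_T`. -/
def SolveL (ε : ℝ) (A : Eu n → ℝ → Matrix (Fin n) (Fin n) ℝ) (b : Eu n → Eu n)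
    (u : Eu n → ℝ → ℝ) (Ω : Set (Eu n)) (T : ℝ≥0∞) : Prop :=
  ∀ x ∈ Ω, ∀ t : ℝ, 0 < t → ENNReal.ofReal t < T →
    tD u x t = ε * trMul (A x t) (sH u x t) + dotp (b x) (sG u x t)

/-- `u` is a classical subsolution of `(L)` in `Q_T`. -/
def SubsolL (ε : ℝ) (A : Eu n → ℝ → Matrix (Fin n) (Fin n) ℝ) (b : Eu n → Eu n)
    (u : Eu n → ℝ → ℝ) (Ω : Set (Eu n)) (T : ℝ≥0∞) : Prop :=
  ∀ x ∈ Ω, ∀ t : ℝ, 0 < t → ENNReal.ofReal t < T →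
    tD u x t ≤ ε * trMul (A x t) (sH u x t) + dotp (b x) (sG u x t)

/-- `u` is a classical supersolution of `(L)` in `Q_T`. -/
def SupersolL (ε : ℝ) (A : Eu n → ℝ → Matrix (Fin n) (Fin n) ℝ) (b : Eu n → Eu n)
    (u : Eu n → ℝ → ℝ) (Ω : Set (Eu n)) (T : ℝ≥0∞) : Prop :=
  ∀ x ∈ Ω, ∀ t : ℝ, 0 < t → ENNReal.ofReal t < T →
    ε * trMul (A x t) (sH u x t) + dotp (b x) (sG u x t) ≤ tD u x t

/-- viscosity subsolution of `H(x,Du) = 0` on `A`. -/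
def ViscSub (H : Eu n → Eu n → ℝ) (A : Set (Eu n)) (u : Eu n → ℝ) : Prop :=
  ∀ φ : Eu n → ℝ, ContDiff ℝ 1 φ → ∀ x ∈ A,
    IsLocalMaxOn (fun y => u y - φ y) A x → H x (gradient φ x) ≤ 0

/-- viscosity supersolution of `H(x,Du) = 0` on `A`. -/
def ViscSup (H : Eu n → Eu n → ℝ) (A : Set (Eu n)) (u : Eu n → ℝ) : Prop :=
  ∀ φ : Eu n → ℝ, ContDiff ℝ 1 φ → ∀ x ∈ A,
    IsLocalMinOn (fun y => u y - φ y) A x → 0 ≤ H x (gradient φ x)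

/-- the Hamiltonian `H_α(x,p) = α(x) p·p + b(x)·p`. -/
def Ham (α : Eu n → Matrix (Fin n) (Fin n) ℝ) (b : Eu n → Eu n) (x p : Eu n) : ℝ :=
  mquad (α x) p + dotp (b x) p

/-- the quasi-potential `V_α`: the pointwise supremum (= maximal element) of all
Lipschitz viscosity subsolutions of `H_α(x,Du)=0` in `Ω` vanishing at the origin. -/
def Vq (α : Eu n → Matrix (Fin n) (Fin n) ℝ) (b : Eu n → Eu n) (Ω : Set (Eu n))
    (x : Eu n) : ℝ :=
  sSup {r | ∃ u : Eu n → ℝ, (∃ K : NNReal, LipschitzOnWith K u (closure Ω)) ∧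
    u 0 = 0 ∧ ViscSub (Ham α b) Ω u ∧ r = u x}

/-- `M_α = min_{∂Ω} V_α`. -/
def Mq (α : Eu n → Matrix (Fin n) (Fin n) ℝ) (b : Eu n → Eu n) (Ω : Set (Eu n)) : ℝ :=
  sInf (Vq α b Ω '' frontier Ω)

/-- `argmin (V_α | ∂Ω)`. -/
def argminV (α : Eu n → Matrix (Fin n) (Fin n) ℝ) (b : Eu n → Eu n)
    (Ω : Set (Eu n)) : Set (Eu n) :=
  {x ∈ frontier Ω | ∀ y ∈ frontier Ω, Vq α b Ω x ≤ Vq α b Ω y}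

/-- `Σ_α^m = {x ∈ Ω̄ : V_α(x) ≤ m}`. -/
def SigmaM (α : Eu n → Matrix (Fin n) (Fin n) ℝ) (b : Eu n → Eu n) (Ω : Set (Eu n))
    (m : ℝ) : Set (Eu n) :=
  {x ∈ closure Ω | Vq α b Ω x ≤ m}

/-- `Ω` is a bounded `C¹` domain with outward unit normal `ν`. -/
def IsBdC1With (Ω : Set (Eu n)) (ν : Eu n → Eu n) : Prop :=
  IsOpen Ω ∧ Bornology.IsBounded Ω ∧
  ∃ ρ : Eu n → ℝ, ContDiff ℝ 1 ρ ∧ Ω = {x | ρ x < 0} ∧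
    ∀ x ∈ frontier Ω, gradient ρ x ≠ 0 ∧ ν x = ‖gradient ρ x‖⁻¹ • gradient ρ x

/-- `X` is the flow of `b`, and the origin is globally asymptotically stable. -/
def GAS (b : Eu n → Eu n) (X : ℝ → Eu n → Eu n) : Prop :=
  (∀ x, X 0 x = x) ∧ (∀ x t, HasDerivAt (fun s => X s x) (b (X t x)) t) ∧
  (∀ x, Tendsto (fun t => X t x) atTop (nhds 0)) ∧
  (∀ ε > (0:ℝ), ∃ δ > (0:ℝ), ∀ x : Eu n, ‖x‖ < δ → ∀ t ≥ (0:ℝ), ‖X t x‖ < ε)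

/-- `Ω_δ = {x ∈ Ω : dist(x,∂Ω) > δ}`. -/
def Omd (Ω : Set (Eu n)) (δ : ℝ) : Set (Eu n) := {x ∈ Ω | δ < infDist x (frontier Ω)}

/-- `Ω^Π_δ = {x ∈ Ω̄ : dist(x, ∂Ω \ Π) > δ}`. -/
def OmPid (Ω Pset : Set (Eu n)) (δ : ℝ) : Set (Eu n) :=
  {x ∈ closure Ω | δ < infDist x (frontier Ω \ Pset)}

/-- the standing assumptions (B). -/
structure SettingB (n : ℕ) where
  Ω : Set (Eu n)
  ν : Eu n → Eu n
  g : Eu n → ℝ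
  θ₀ : ℝ
  a : Eu n → ℝ → Matrix (Fin n) (Fin n) ℝ
  b : Eu n → Eu n
  b₀ : ℝ
  r₀ : ℝ
  θ₀_mem : θ₀ ∈ Set.Ioc (0 : ℝ) 1
  domain : IsBdC1With Ω ν
  zero_mem : (0 : Eu n) ∈ Ω
  g_cont : ContinuousOn g (closure Ω)
  a_cont : ContinuousOn (fun p : Eu n × ℝ => a p.1 p.2) (closure Ω ×ˢ Set.univ)
  a_mem : ∀ x ∈ closure Ω, ∀ c : ℝ, memS θ₀ (a x c)
  b_lip : ∃ K : NNReal, LipschitzWith K b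
  b_zero : b 0 = 0
  b_gas : ∃ X : ℝ → Eu n → Eu n, GAS b X
  b_inward : ∀ x ∈ frontier Ω, dotp (b x) (ν x) < 0
  b₀_pos : 0 < b₀
  r₀_pos : 0 < r₀
  ball_sub : closedBall (0 : Eu n) r₀ ⊆ Ω
  b_coerc : ∀ x ∈ ball (0 : Eu n) r₀, dotp (b x) x ≤ -b₀ * ‖x‖ ^ 2

namespace SettingB

variable (S : SettingB n)

/-- the quasi-potential `V^c` associated with `(a(·,c), b)`. -/
def Vc (c : ℝ) : Eu n → ℝ := Vq (fun x => S.a x c) S.b S.Ω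

/-- `M(c) = min_{∂Ω} V^c`. -/
def M (c : ℝ) : ℝ := sInf (S.Vc c '' frontier S.Ω)

/-- `G(c) = {g(x) : x ∈ argmin(V^c|∂Ω)}`. -/
def Gset (c : ℝ) : Set ℝ := S.g '' argminV (fun x => S.a x c) S.b S.Ω

/-- `G⁺(c) = max G(c)`. -/
def Gp (c : ℝ) : ℝ := sSup (S.Gset c)

/-- `G⁻(c) = min G(c)`. -/
def Gm (c : ℝ) : ℝ := sInf (S.Gset c)

/-- `c₀ = g(0)`. -/
def c0 : ℝ := S.g 0

/-- `g_min = min_{Ω̄} g`. -/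
def gmin : ℝ := sInf (S.g '' closure S.Ω)

/-- `g_max = max_{Ω̄} g`. -/
def gmax : ℝ := sSup (S.g '' closure S.Ω)

/-- the crossing value `c₁`. -/
def c1 : ℝ :=
  if S.c0 ≤ S.Gp S.c0 then sInf {c | S.c0 ≤ c ∧ S.Gm c ≤ c}
  else sSup {c | c ≤ S.c0 ∧ c ≤ S.Gp c}

/-- the function `c̄ : (0,∞) → I_g`. -/
def cbar (l : ℝ) : ℝ :=
  if l < S.M S.c0 ∨ S.c1 = S.c0 then S.c0
  else if S.c0 < S.c1 then min S.c1 (sInf {c | c ∈ Set.Icc S.c0 S.c1 ∧ S.M c = l})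
  else max S.c1 (sSup {c | c ∈ Set.Icc S.c1 S.c0 ∧ S.M c = l})

/-- assumption (FK13): `G⁺(c₀) = G⁻(c₀)`. -/
def FK13 : Prop := S.Gp S.c0 = S.Gm S.c0

/-- assumption (FK12). -/
def FK12 : Prop :=
  ∀ δ₀ > (0:ℝ), ∃ δ ∈ Set.Ioc (0:ℝ) δ₀,
    (S.c1 ≤ S.c0 ∧ S.gmin < S.c1 → S.c1 - δ < S.Gm (S.c1 - δ)) ∧
    (S.c0 ≤ S.c1 ∧ S.c1 < S.gmax → S.Gp (S.c1 + δ) < S.c1 + δ)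

/-- `u` is a classical (`C(Q̄) ∩ C^{2,1}(Q)`) solution of the quasi-linear equation (QL). -/
def SolvesQL (ε : ℝ) (u : Eu n → ℝ → ℝ) : Prop :=
  Classical21 u S.Ω ⊤ ∧ SolveL ε (fun x t => S.a x (u x t)) S.b u S.Ω ⊤

/-- the boundary condition (BC): `u = g` on the parabolic boundary of `Q`. -/
def BC (u : Eu n → ℝ → ℝ) : Prop :=
  (∀ x ∈ closure S.Ω, u x 0 = S.g x) ∧ ∀ x ∈ frontier S.Ω, ∀ t > (0:ℝ), u x t = S.g x

end SettingB

/-- gradient of `N‖z - c‖²`. -/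
lemma gradient_sqdist (N : ℝ) (c z : Eu n) :
    gradient (fun y : Eu n => N * ‖y - c‖ ^ 2) z = (2 * N) • (z - c) := by
  apply HasGradientAt.gradient
  have h1 : HasFDerivAt (fun y : Eu n => y - c) (ContinuousLinearMap.id ℝ (Eu n)) z :=
    (hasFDerivAt_id z).sub_const c
  have h2 := (h1.norm_sq).const_mul N
  rw [hasGradientAt_iff_hasFDerivAt]
  refine h2.congr_fderiv ?_
  ext w
  simp
  ring

/-- Viscosity subsolutions satisfy a curve inequality. -/
lemma visc_curve (H : Eu n → Eu n → ℝ) (Ω U : Set (Eu n)) (hU : IsOpen U) (hUΩ : U ⊆ Ω)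
    (u : Eu n → ℝ) (hu : ContinuousOn u U) (hv : ViscSub H Ω u)
    (γ γ' : ℝ → Eu n) (hγ : ∀ s, HasDerivAt γ (γ' s) s) (T : ℝ) (hT : 0 ≤ T)
    (hin : ∀ s ∈ Icc 0 T, γ s ∈ U) (m : ℝ)
    (hm : ∀ s ∈ Icc 0 T, ∀ z ∈ U, ∀ p : Eu n, H z p ≤ 0 → inner ℝ p (γ' s) ≤ m) :
    u (γ T) - u (γ 0) ≤ m * T := by
  rcases hT.eq_or_lt with rfl | hT0
  · simp
  by_contra hcon
  push Not at hcon
  obtain ⟨m', hm'1, hm'2⟩ : ∃ m', m < m' ∧ m' * T < u (γ T) - u (γ 0) := by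
    have : m < (u (γ T) - u (γ 0)) / T := by rwa [lt_div_iff₀ hT0]
    obtain ⟨m', h1, h2⟩ := exists_between this
    exact ⟨m', h1, by rwa [lt_div_iff₀ hT0] at h2⟩
  have hγc : Continuous γ := continuous_iff_continuousAt.2 fun s => (hγ s).continuousAt
  have hK : IsCompact (γ '' Icc 0 T) := isCompact_Icc.image hγc
  have hKU : γ '' Icc 0 T ⊆ U := by
    rintro _ ⟨s, hs, rfl⟩; exact hin s hs
  obtain ⟨ρ, hρ, hρU⟩ := hK.exists_cthickening_subset_open hU hKU
  set Kc := cthickening ρ (γ '' Icc 0 T) with hKc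
  have hKcc : IsCompact Kc := hK.cthickening
  have hball : ∀ s ∈ Icc 0 T, closedBall (γ s) ρ ⊆ Kc := fun s hs =>
    closedBall_subset_cthickening (mem_image_of_mem γ hs) ρ
  obtain ⟨M, hM⟩ := hKcc.exists_bound_of_continuousOn (hu.mono hρU)
  set g := u (γ T) - u (γ 0) - m' * T with hg
  have hg0 : 0 < g := by linarith
  have h0mem : (0:ℝ) ∈ Icc 0 T := ⟨le_rfl, hT⟩
  have hTmem : T ∈ Icc 0 T := ⟨hT, le_rfl⟩
  have hc0 : ContinuousAt u (γ 0) := hu.continuousAt (hU.mem_nhds (hin 0 h0mem))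
  obtain ⟨δ, hδ, hδu⟩ := Metric.continuousAt_iff.1 hc0 g hg0
  set d := min ρ δ with hd
  have hd0 : 0 < d := lt_min hρ hδ
  set Q := 2 * M + 2 * |m'| * T + 1 with hQ
  set N := Q / d ^ 2 with hN
  have hM0 : 0 ≤ M := le_trans (norm_nonneg _)
    (hM (γ 0) (hball 0 h0mem (mem_closedBall_self hρ.le)))
  have hQ0 : 0 < Q := by positivity
  have hN0 : 0 < N := by positivity
  have hNd : N * d ^ 2 = Q := by rw [hN]; field_simp
  clear_value N Q d g Kc
  have hFc : ContinuousOn (fun q : ℝ × Eu n => u q.2 - m' * q.1 - N * ‖q.2 - γ q.1‖ ^ 2)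
      (Icc 0 T ×ˢ Kc) := by
    have h1 : ContinuousOn (fun q : ℝ × Eu n => u q.2) (Icc 0 T ×ˢ Kc) :=
      (hu.mono hρU).comp continuousOn_snd (fun q hq => hq.2)
    refine (h1.sub (by fun_prop)).sub ?_
    exact Continuous.continuousOn (by fun_prop)
  obtain ⟨⟨s, z⟩, ⟨hs, hz⟩, hmax⟩ := (isCompact_Icc.prod hKcc).exists_isMaxOn
    ⟨((0:ℝ), γ 0), h0mem, hball 0 h0mem (mem_closedBall_self hρ.le)⟩ hFc
  simp only at hs hz
  have hmax' : ∀ s' ∈ Icc 0 T, ∀ z' ∈ Kc, u z' - m' * s' - N * ‖z' - γ s'‖ ^ 2 ≤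
      u z - m' * s - N * ‖z - γ s‖ ^ 2 := fun s' hs' z' hz' =>
    isMaxOn_iff.1 hmax (s', z') ⟨hs', hz'⟩
  have hTT := hmax' T hTmem (γ T) (hball T hTmem (mem_closedBall_self hρ.le))
  simp only [sub_self, norm_zero] at hTT
  have hb1 := abs_le.1 (hM (γ T) (hball T hTmem (mem_closedBall_self hρ.le)))
  have hb2 := abs_le.1 (hM z hz)
  have hms : |m' * T - m' * s| ≤ 2 * |m'| * T := by
    rw [← mul_sub, abs_mul]
    have : |T - s| ≤ 2 * T := by rw [abs_le]; constructor <;> linarith [hs.1, hs.2]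
    nlinarith [abs_nonneg m']
  have hms' := abs_le.1 hms
  have hlt : ‖z - γ s‖ < d := by
    have h1 : N * ‖z - γ s‖ ^ 2 < N * d ^ 2 := by rw [hNd]; linarith
    have h2 := lt_of_mul_lt_mul_left h1 hN0.le
    exact lt_of_pow_lt_pow_left₀ 2 hd0.le h2
  have hs0 : 0 < s := by
    rcases hs.1.eq_or_lt with h | h
    · exfalso
      subst h
      have h3 : dist z (γ 0) < δ := by rw [dist_eq_norm]; exact hlt.trans_le (hd ▸ min_le_right _ _)
      have h4 := hδu h3
      rw [Real.dist_eq] at h4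
      have h5 := (abs_lt.1 h4).2
      have h6 : 0 ≤ N * ‖z - γ 0‖ ^ 2 := by positivity
      linarith
    · exact h
  have hzU : z ∈ U := hρU hz
  have hH : H z ((2 * N) • (z - γ s)) ≤ 0 := by
    have h1 : ContDiff ℝ 1 (fun y : Eu n => N * ‖y - γ s‖ ^ 2) :=
      contDiff_const.mul ((contDiff_id.sub contDiff_const).norm_sq ℝ)
    have h2 := hv _ h1 z (hUΩ hzU) ?_
    · rwa [gradient_sqdist] at h2
    · have h3 : ∀ᶠ y in 𝓝 z, y ∈ ball (γ s) ρ := by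
        apply isOpen_ball.mem_nhds
        rw [mem_ball, dist_eq_norm]; exact hlt.trans_le (hd ▸ min_le_left _ _)
      have h4 : ∀ᶠ y in 𝓝 z, u y - N * ‖y - γ s‖ ^ 2 ≤ u z - N * ‖z - γ s‖ ^ 2 := by
        filter_upwards [h3] with y hy
        have := hmax' s hs y (hball s hs (ball_subset_closedBall hy))
        linarith
      exact h4.filter_mono nhdsWithin_le_nhds
  have hp := hm s hs z hzU _ hH
  -- derivative in `s`
  have hder : HasDerivAt (fun s' => - m' * s' - N * ‖z - γ s'‖ ^ 2)
      (- m' - N * (2 * inner ℝ (z - γ s) (- γ' s))) s := by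
    have h1 : HasDerivAt (fun s' => z - γ s') (- γ' s) s := by
      exact (hγ s).const_sub z
    have h2 := (h1.norm_sq).const_mul N
    have h3 := (hasDerivAt_id s).const_mul (-m')
    have h4 := h3.sub h2
    rw [mul_one] at h4
    exact h4
  have hder2 := (hder.hasDerivWithinAt (s := Iio s))
  rw [hasDerivWithinAt_iff_tendsto_slope' (by simp)] at hder2
  have hnn : 0 ≤ - m' - N * (2 * inner ℝ (z - γ s) (- γ' s)) := by
    refine ge_of_tendsto hder2 ?_
    have h1 : ∀ᶠ y in 𝓝[<] s, y ∈ Ioo 0 s := Ioo_mem_nhdsLT hs0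
    filter_upwards [h1] with y hy
    rw [slope_def_field]
    have h2 := hmax' y ⟨hy.1.le, hy.2.le.trans hs.2⟩ z hz
    apply div_nonneg_of_nonpos
    · linarith
    · linarith [hy.2]
  rw [inner_neg_right] at hnn
  rw [inner_smul_left] at hp
  simp at hp
  nlinarith

open MeasureTheory in
/-- Mollification lemma. -/
lemma mollify (w : Eu n → ℝ) (L : NNReal) (hw : LipschitzWith L w) (ε : ℝ) (hε : 0 < ε) :
    ∃ v : Eu n → ℝ, ContDiff ℝ 2 v ∧ (∀ x, |v x - w x| ≤ L * ε) ∧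
      ∀ x e : Eu n, ∀ m : ℝ, (∃ h₀ > (0:ℝ), ∀ y, ‖y - x‖ ≤ ε → ∀ h ∈ Ioo 0 h₀,
        w (y + h • e) - w y ≤ h * m) → inner ℝ (gradient v x) e ≤ m := by
  let φ : ContDiffBump (0 : Eu n) := ⟨ε / 2, ε, by positivity, by linarith⟩
  set f : Eu n → ℝ := φ.normed volume with hf
  have hfc : Continuous f := φ.continuous_normed
  have hfs : HasCompactSupport f := φ.hasCompactSupport_normed
  have hwc : Continuous w := hw.continuous
  let v : Eu n → ℝ := MeasureTheory.convolution f w (ContinuousLinearMap.lsmul ℝ ℝ) volume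
  have hvC : ContDiff ℝ 2 v :=
    hfs.contDiff_convolution_left (n := 2) _ φ.contDiff_normed hwc.locallyIntegrable
  have hvx : ∀ x, v x = ∫ t, f t * w (x - t) := fun x => rfl
  have hInt : ∀ x, Integrable (fun t => f t * w (x - t)) := fun x => by
    apply Continuous.integrable_of_hasCompactSupport (by fun_prop)
    exact hfs.mul_right
  refine ⟨v, hvC, ?_, ?_⟩
  · intro x
    have := φ.dist_normed_convolution_le (μ := volume) (g := w) (x₀ := x) (ε := L * ε)
      hwc.aestronglyMeasurable ?_
    · rwa [Real.dist_eq] at this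
    · intro y hy
      refine (hw.dist_le_mul y x).trans ?_
      have : dist y x < ε := hy
      gcongr
  · rintro x e m ⟨h₀, hh₀, hseg⟩
    have hd : HasDerivAt (fun h : ℝ => v (x + h • e)) (inner ℝ (gradient v x) e) 0 := by
      have h1 : DifferentiableAt ℝ v (x + (0:ℝ) • e) :=
        (hvC.differentiable (by norm_num)).differentiableAt
      have h2 : HasDerivAt (fun h : ℝ => x + h • e) e 0 := by
        simpa using ((hasDerivAt_id (0:ℝ)).smul_const e).const_add x
      have h3 := h1.hasFDerivAt.comp_hasDerivAt (0:ℝ) h2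
      have h4 : inner ℝ (gradient v x) e = fderiv ℝ v (x + (0:ℝ) • e) e := by
        rw [zero_smul, add_zero]
        exact InnerProductSpace.toDual_symm_apply
      rw [h4]
      exact h3
    have hd2 := hd.hasDerivWithinAt (s := Ioi 0)
    rw [hasDerivWithinAt_iff_tendsto_slope' (by simp)] at hd2
    refine le_of_tendsto hd2 ?_
    have h1 : ∀ᶠ y in 𝓝[>] (0:ℝ), y ∈ Ioo 0 h₀ := Ioo_mem_nhdsGT hh₀
    filter_upwards [h1] with h hh
    rw [slope_def_field]
    simp only [zero_smul, add_zero, sub_zero]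
    rw [div_le_iff₀ hh.1, hvx, hvx, ← integral_sub (hInt _) (hInt _)]
    have h5 : m * h = ∫ t, f t * (h * m) := by
      rw [integral_mul_const, hf, φ.integral_normed]; ring
    rw [h5]
    apply integral_mono ((hInt _).sub (hInt _)) (φ.integrable_normed.mul_const _)
    intro t
    change f t * w (x + h • e - t) - f t * w (x - t) ≤ f t * (h * m)
    rw [← mul_sub]
    by_cases ht : t ∈ ball (0 : Eu n) ε
    · apply mul_le_mul_of_nonneg_left _ (φ.nonneg_normed t)
      have h6 := hseg (x - t) (by
        rw [mem_ball_zero_iff] at ht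
        simpa using ht.le) h hh
      have h8 : x + h • e - t = x - t + h • e := by abel
      rw [h8]
      exact h6
    · have : f t = 0 := by
        have h7 : t ∉ Function.support f := by rw [hf, φ.support_normed_eq]; exact ht
        simpa using h7
      simp [this]

lemma dotp_eq (x y : Eu n) : dotp x y = inner ℝ x y := by
  simp only [dotp, PiLp.inner_apply]
  apply Finset.sum_congr rfl
  intro i _
  simp [mul_comm]

/-- the operator of a matrix. -/
def Aop (M : Matrix (Fin n) (Fin n) ℝ) : Eu n →L[ℝ] Eu n := Matrix.toEuclideanCLM (𝕜 := ℝ) M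

lemma inner_Aop' (M : Matrix (Fin n) (Fin n) ℝ) (p q : Eu n) :
    inner ℝ p (Aop M q) = ∑ i, ∑ j, M i j * p i * q j := by
  rw [Aop, Matrix.inner_toEuclideanCLM]
  simp only [dotProduct, Matrix.mulVec, Finset.mul_sum]
  refine Finset.sum_congr rfl fun i _ => Finset.sum_congr rfl fun j _ => ?_
  ring

lemma inner_Aop (M : Matrix (Fin n) (Fin n) ℝ) (p : Eu n) :
    inner ℝ p (Aop M p) = mquad M p := by
  rw [inner_Aop', mquad]

lemma inner_Aop_symm (M : Matrix (Fin n) (Fin n) ℝ) (hM : M.IsSymm) (p q : Eu n) :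
    inner ℝ p (Aop M q) = inner ℝ q (Aop M p) := by
  rw [inner_Aop', inner_Aop', Finset.sum_comm]
  refine Finset.sum_congr rfl fun i _ => Finset.sum_congr rfl fun j _ => ?_
  rw [hM.apply]
  ring

lemma Aop_cont : Continuous (Aop : Matrix (Fin n) (Fin n) ℝ → (Eu n →L[ℝ] Eu n)) := by
  let f : Matrix (Fin n) (Fin n) ℝ →ₗ[ℝ] (Eu n →L[ℝ] Eu n) :=
    (Matrix.toEuclideanCLM (𝕜 := ℝ) (n := Fin n)).toAlgEquiv.toLinearMap
  exact f.continuous_of_finiteDimensional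

lemma Ham_eq (α : Eu n → Matrix (Fin n) (Fin n) ℝ) (b : Eu n → Eu n) (x p : Eu n) :
    Ham α b x p = inner ℝ p (Aop (α x) p) + inner ℝ p (b x) := by
  rw [Ham, inner_Aop, dotp_eq, real_inner_comm]

/-- `2 Ap·q ≤ Ap·p + Aq·q`. -/
lemma Aop_young {θ : ℝ} (hθ : 0 ≤ θ) {M : Matrix (Fin n) (Fin n) ℝ} (hM : memS θ M) (p q : Eu n) :
    2 * inner ℝ p (Aop M q) ≤ inner ℝ p (Aop M p) + inner ℝ q (Aop M q) := by
  have h := (hM.2 (p - q)).1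
  rw [← inner_Aop, map_sub, inner_sub_left, inner_sub_right, inner_sub_right,
    inner_Aop_symm M hM.1 q p] at h
  have : 0 ≤ θ * ‖p - q‖ ^ 2 := by positivity
  linarith

section Flow

variable {b : Eu n → Eu n} {K : NNReal} {X : ℝ → Eu n → Eu n}

lemma flow_cont (hX : GAS b X) (x : Eu n) : Continuous fun t => X t x :=
  continuous_iff_continuousAt.2 fun t => (hX.2.1 x t).continuousAt

lemma flow_lip (hb : LipschitzWith K b) (hX : GAS b X) (x y : Eu n) {t : ℝ} (ht : 0 ≤ t) :
    ‖X t x - X t y‖ ≤ Real.exp (K * t) * ‖x - y‖ := by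
  have h := dist_le_of_trajectories_ODE (v := fun _ => b) (K := K) (f := fun s => X s x)
    (g := fun s => X s y) (a := 0) (b := t) (δ := ‖x - y‖) (fun _ => hb)
    (flow_cont hX x).continuousOn (fun s _ => (hX.2.1 x s).hasDerivWithinAt)
    (flow_cont hX y).continuousOn (fun s _ => (hX.2.1 y s).hasDerivWithinAt)
    (by simp only [hX.1, dist_eq_norm]; exact le_rfl) t ⟨ht, le_rfl⟩
  rw [dist_eq_norm, sub_zero, mul_comm] at h
  exact h

lemma flow_add (hb : LipschitzWith K b) (hX : GAS b X) (x : Eu n) (t : ℝ) {s : ℝ} (hs : 0 ≤ s) :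
    X s (X t x) = X (s + t) x := by
  have hd : ∀ r, HasDerivAt (fun s => X (s + t) x) (b (X (r + t) x)) r := fun r =>
    (hX.2.1 x (r + t)).comp_add_const r t
  have h := dist_le_of_trajectories_ODE (v := fun _ => b) (K := K) (f := fun s => X s (X t x))
    (g := fun s => X (s + t) x) (a := 0) (b := s) (δ := 0) (fun _ => hb)
    (flow_cont hX _).continuousOn (fun s _ => (hX.2.1 _ s).hasDerivWithinAt)
    (continuous_iff_continuousAt.2 fun r => (hd r).continuousAt).continuousOn
    (fun r _ => (hd r).hasDerivWithinAt)
    (by simp [hX.1]) s ⟨hs, le_rfl⟩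
  simpa using h

lemma flow_near (hb : LipschitzWith K b) (hX : GAS b X) (x y : Eu n) {t : ℝ} (ht : t ∈ Icc (0:ℝ) 1) :
    ‖X t x - X t y - (x - y)‖ ≤ K * Real.exp K * ‖x - y‖ * t := by
  have h := norm_image_sub_le_of_norm_deriv_le_segment' (a := 0) (b := 1)
    (f := fun s => X s x - X s y) (f' := fun s => b (X s x) - b (X s y))
    (C := K * Real.exp K * ‖x - y‖)
    (fun s _ => ((hX.2.1 x s).sub (hX.2.1 y s)).hasDerivWithinAt) (fun s hs => ?_) t ht
  · simpa [hX.1] using h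
  · have h1 := hb.dist_le_mul (X s x) (X s y)
    rw [dist_eq_norm, dist_eq_norm] at h1
    refine h1.trans ?_
    rw [mul_assoc]
    gcongr
    refine (flow_lip hb hX x y hs.1).trans ?_
    gcongr
    have := hs.2.le
    nlinarith [K.2]

lemma flow_speed (hX : GAS b X) (x : Eu n) (B t : ℝ) (ht : 0 ≤ t)
    (hB : ∀ s ∈ Icc 0 t, ‖b (X s x)‖ ≤ B) : ‖X t x - x‖ ≤ B * t := by
  have h := norm_image_sub_le_of_norm_deriv_le_segment' (a := 0) (b := t)
    (f := fun s => X s x) (f' := fun s => b (X s x)) (C := B)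
    (fun s _ => (hX.2.1 x s).hasDerivWithinAt) (fun s hs => hB s ⟨hs.1, hs.2.le⟩) t ⟨ht, le_rfl⟩
  simpa [hX.1] using h

end Flow

section Inv

variable (S : SettingB n) {X : ℝ → Eu n → Eu n}

lemma isOpen_Om : IsOpen S.Ω := S.domain.1

lemma isCompact_cl : IsCompact (closure S.Ω) := S.domain.2.1.isCompact_closure

/-- Forward invariance. -/
lemma flow_inv (hX : GAS S.b X) {x : Eu n} (hx : x ∈ closure S.Ω) :
    (∀ t ≥ 0, X t x ∈ closure S.Ω) ∧ ∀ t > 0, X t x ∈ S.Ω := by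
  obtain ⟨hO, -, ρ, hρ, hΩ, hfr⟩ := S.domain
  have hle : ∀ y ∈ closure S.Ω, ρ y ≤ 0 := by
    intro y hy
    have h1 : IsClosed {y | ρ y ≤ 0} := isClosed_le hρ.continuous continuous_const
    have h2 : S.Ω ⊆ {y | ρ y ≤ 0} := by rw [hΩ]; intro z hz; simp only [mem_ofPred_eq] at hz ⊢; exact hz.le
    exact closure_minimal h2 h1 hy
  have hmem : ∀ y, ρ y < 0 → y ∈ S.Ω := by intro y hy; rw [hΩ]; exact hy
  have hder : ∀ t, X t x ∈ closure S.Ω → X t x ∉ S.Ω → ρ (X t x) = 0 ∧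
      ∃ c < 0, HasDerivAt (fun s => ρ (X s x)) c t := by
    intro t h1 h2
    have hf : X t x ∈ frontier S.Ω := by rw [frontier, hO.interior_eq]; exact ⟨h1, h2⟩
    obtain ⟨hg, hν⟩ := hfr _ hf
    have hin := S.b_inward _ hf
    refine ⟨le_antisymm (hle _ h1) (not_lt.1 fun h => h2 (hmem _ h)), _, ?_,
      ((hρ.differentiable (by norm_num)).differentiableAt.hasFDerivAt).comp_hasDerivAt t
        (hX.2.1 x t)⟩
    rw [hν, dotp_eq, inner_smul_right] at hin
    have hpos : 0 < ‖gradient ρ (X t x)‖⁻¹ := by positivity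
    have h4 : inner ℝ (gradient ρ (X t x)) (S.b (X t x)) = fderiv ℝ ρ (X t x) (S.b (X t x)) :=
      InnerProductSpace.toDual_symm_apply
    rw [← h4, real_inner_comm]
    by_contra h
    push Not at h
    have := mul_nonneg hpos.le h
    linarith
  have hcl : ∀ t ≥ 0, X t x ∈ closure S.Ω := by
    intro t ht
    have hc : IsClosed ({s | X s x ∈ closure S.Ω} ∩ Icc 0 t) :=
      (isClosed_closure.preimage (flow_cont hX x)).inter isClosed_Icc
    have h0 : (0:ℝ) ∈ {s | X s x ∈ closure S.Ω} := by
      rw [mem_ofPred_eq]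
      rw [hX.1]; exact hx
    refine hc.Icc_subset_of_forall_exists_gt h0 ?_ ⟨ht, le_rfl⟩
    rintro s ⟨hs, hs2⟩ y hy
    have hs' : X s x ∈ closure S.Ω := hs
    have hev : ∀ᶠ r in 𝓝[>] s, X r x ∈ S.Ω := by
      by_cases hso : X s x ∈ S.Ω
      · have : ∀ᶠ r in 𝓝 s, X r x ∈ S.Ω :=
          (flow_cont hX x).continuousAt.eventually_mem (hO.mem_nhds hso)
        exact this.filter_mono nhdsWithin_le_nhds
      · obtain ⟨hz, c, hc0, hd⟩ := hder s hs' hso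
        have hd2 := hd.hasDerivWithinAt (s := Ioi s)
        rw [hasDerivWithinAt_iff_tendsto_slope' (by simp)] at hd2
        filter_upwards [hd2.eventually_lt_const hc0, self_mem_nhdsWithin] with r hr hrs
        apply hmem
        rw [slope_def_field, hz, sub_zero, div_lt_iff₀ (sub_pos.2 hrs), zero_mul] at hr
        exact hr
    have hy2 : ∀ᶠ r in 𝓝[>] s, r ∈ Ioc s y := Ioc_mem_nhdsGT hy
    obtain ⟨r, hr1, hr2⟩ := (hev.and hy2).exists
    exact ⟨r, subset_closure hr1, hr2⟩
  refine ⟨hcl, fun t ht => ?_⟩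
  by_contra hno
  obtain ⟨hz, c, hc0, hd⟩ := hder t (hcl t ht.le) hno
  have hd2 := hd.hasDerivWithinAt (s := Iio t)
  rw [hasDerivWithinAt_iff_tendsto_slope' (by simp)] at hd2
  have h1 : ∀ᶠ y in 𝓝[<] t, y ∈ Ioo 0 t := Ioo_mem_nhdsLT ht
  obtain ⟨r, hr1, hr2⟩ := ((hd2.eventually_lt_const hc0).and h1).exists
  have h3 := hle _ (hcl r hr2.1.le)
  rw [slope_def_field, hz, sub_zero] at hr1
  have : 0 ≤ ρ (X r x) / (r - t) := div_nonneg_of_nonpos h3 (by linarith [hr2.2])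
  linarith

/-- Uniform entering time. -/
lemma flow_enter (hX : GAS S.b X) (s : ℝ) (hs : 0 < s) :
    ∃ T > (0:ℝ), ∀ x ∈ closure S.Ω, ∀ t ≥ T, ‖X t x‖ < s := by
  obtain ⟨K, hb⟩ := S.b_lip
  obtain ⟨δ, hδ, hst⟩ := hX.2.2.2 s hs
  have hloc : ∀ x ∈ closure S.Ω, ∃ T > (0:ℝ), ∀ᶠ y in 𝓝 x, ∀ t ≥ T, ‖X t y‖ < s := by
    intro x _
    have h1 : ∀ᶠ t in atTop, ‖X t x‖ < δ := by
      have := (hX.2.2.1 x).norm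
      rw [norm_zero] at this
      exact this.eventually_lt_const hδ
    obtain ⟨T, hT, hT0⟩ := (h1.and (eventually_gt_atTop 0)).exists
    refine ⟨T, hT0, ?_⟩
    have hlip : LipschitzWith (Real.toNNReal (Real.exp (K * T))) (X T) := by
      apply LipschitzWith.of_dist_le_mul
      intro a c
      rw [dist_eq_norm, dist_eq_norm, Real.coe_toNNReal _ (Real.exp_pos _).le]
      exact flow_lip hb hX a c hT0.le
    have h2 : ∀ᶠ y in 𝓝 x, ‖X T y‖ < δ :=
      hlip.continuous.norm.continuousAt.eventually_lt_const hT
    filter_upwards [h2] with y hy t ht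
    have := hst (X T y) hy (t - T) (by linarith)
    rwa [flow_add hb hX _ _ (by linarith), sub_add_cancel] at this
  choose! T hT hTe using hloc
  obtain ⟨F, hF, hcov⟩ := (isCompact_cl S).elim_nhds_subcover
    (fun x => {y | ∀ t ≥ T x, ‖X t y‖ < s}) (fun x hx => hTe x hx)
  refine ⟨1 + ∑ x ∈ F, T x, ?_, ?_⟩
  · have : 0 ≤ ∑ x ∈ F, T x := Finset.sum_nonneg fun x hx => (hT x (hF x hx)).le
    linarith
  · intro y hy t ht
    obtain ⟨x, hx, hyx⟩ := mem_iUnion₂.1 (hcov hy)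
    refine hyx t ?_
    have : T x ≤ ∑ x ∈ F, T x :=
      Finset.single_le_sum (f := T) (fun x hx => (hT x (hF x hx)).le) hx
    linarith

end Inv

/-- Admissible subsolutions. -/
def InF (S : SettingB n) (α : Eu n → Matrix (Fin n) (Fin n) ℝ) (u : Eu n → ℝ) : Prop :=
  (∃ K : NNReal, LipschitzOnWith K u (closure S.Ω)) ∧ u 0 = 0 ∧ ViscSub (Ham α S.b) S.Ω u

section Sub

variable (S : SettingB n) {α : Eu n → Matrix (Fin n) (Fin n) ℝ}
  {B : ℝ} {X : ℝ → Eu n → Eu n}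

lemma B_nonneg
    (hB : ∀ x ∈ closure S.Ω, ‖S.b x‖ ≤ B)
    : 0 ≤ B := (norm_nonneg _).trans (hB 0 (subset_closure S.zero_mem))

lemma p_bound
    (hαm : ∀ x ∈ closure S.Ω, memS S.θ₀ (α x))
    (hB : ∀ x ∈ closure S.Ω, ‖S.b x‖ ≤ B)
    {z p : Eu n} (hz : z ∈ closure S.Ω) (h : Ham α S.b z p ≤ 0) : ‖p‖ ≤ B / S.θ₀ := by
  have hθ := S.θ₀_mem.1
  rw [Ham_eq, inner_Aop] at h
  have h1 := ((hαm z hz).2 p).1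
  have h2 := abs_le.1 (abs_real_inner_le_norm p (S.b z))
  have h3 := hB z hz
  rw [le_div_iff₀ hθ]
  by_contra hc
  push Not at hc
  have hp : 0 < ‖p‖ := by
    rcases (norm_nonneg p).eq_or_lt with h0 | h0
    · rw [← h0, zero_mul] at hc
      linarith [B_nonneg S hB]
    · exact h0
  nlinarith [mul_lt_mul_of_pos_left hc hp, mul_le_mul_of_nonneg_left h3 hp.le]

lemma F_curve
    (hαm : ∀ x ∈ closure S.Ω, memS S.θ₀ (α x))
    (hB : ∀ x ∈ closure S.Ω, ‖S.b x‖ ≤ B)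
    {u : Eu n → ℝ} (hu : InF S α u) (γ γ' : ℝ → Eu n)
    (hγ : ∀ s, HasDerivAt γ (γ' s) s) (T D : ℝ) (hT : 0 ≤ T)
    (hin : ∀ s ∈ Icc 0 T, γ s ∈ S.Ω) (hD : ∀ s ∈ Icc 0 T, ‖γ' s‖ ≤ D) :
    u (γ T) - u (γ 0) ≤ B / S.θ₀ * D * T := by
  obtain ⟨⟨L, hL⟩, -, hv⟩ := hu
  refine visc_curve _ S.Ω S.Ω (isOpen_Om S) subset_rfl u
    (hL.continuousOn.mono subset_closure) hv γ γ' hγ T hT hin _ ?_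
  intro s hs z hz p hp
  refine (real_inner_le_norm _ _).trans ?_
  have h1 := p_bound S hαm hB (subset_closure hz) hp
  exact mul_le_mul h1 (hD s hs) (norm_nonneg _) ((norm_nonneg _).trans h1)

lemma F_seg
    (hαm : ∀ x ∈ closure S.Ω, memS S.θ₀ (α x))
    (hB : ∀ x ∈ closure S.Ω, ‖S.b x‖ ≤ B)
    {u : Eu n → ℝ} (hu : InF S α u) (x y : Eu n)
    (hin : ∀ s ∈ Icc (0:ℝ) 1, x + s • (y - x) ∈ S.Ω) :
    u y - u x ≤ B / S.θ₀ * ‖y - x‖ := by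
  have h := F_curve S hαm hB hu (fun s => x + s • (y - x)) (fun _ => y - x)
    (fun s => by simpa using ((hasDerivAt_id s).smul_const (y - x)).const_add x) 1 ‖y - x‖
    zero_le_one hin (fun _ _ => le_rfl)
  simpa using h

lemma F_flow
    (hαm : ∀ x ∈ closure S.Ω, memS S.θ₀ (α x))
    (hB : ∀ x ∈ closure S.Ω, ‖S.b x‖ ≤ B)
    (hX : GAS S.b X)
    {u : Eu n → ℝ} (hu : InF S α u) {x : Eu n} (hx : x ∈ closure S.Ω) {t : ℝ}
    (ht : 0 ≤ t) : |u (X t x) - u x| ≤ B / S.θ₀ * B * t := by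
  obtain ⟨K, hb⟩ := S.b_lip
  have hXc : Continuous (X t) := by
    have hlip : LipschitzWith (Real.toNNReal (Real.exp (K * t))) (X t) := by
      apply LipschitzWith.of_dist_le_mul
      intro a c
      rw [dist_eq_norm, dist_eq_norm, Real.coe_toNNReal _ (Real.exp_pos _).le]
      exact flow_lip hb hX a c ht
    exact hlip.continuous
  obtain ⟨L, hL⟩ := hu.1
  have hcont : ContinuousOn (fun x => |u (X t x) - u x|) (closure S.Ω) :=
    ((hL.continuousOn.comp hXc.continuousOn fun y hy => (flow_inv S hX hy).1 t ht).sub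
      hL.continuousOn).abs
  refine le_on_closure (f := fun x => |u (X t x) - u x|) (g := fun _ => B / S.θ₀ * B * t)
    ?_ hcont continuousOn_const hx
  intro y hy
  have hyin : ∀ s ≥ 0, X s y ∈ S.Ω := by
    intro s hs
    rcases hs.eq_or_lt with h | h
    · rw [← h, hX.1]; exact hy
    · exact (flow_inv S hX (subset_closure hy)).2 s h
  have h1 := F_curve S hαm hB hu (fun s => X s y) (fun s => S.b (X s y)) (hX.2.1 y) t B ht
    (fun s hs => hyin s hs.1) (fun s hs => hB _ (subset_closure (hyin s hs.1)))
  have h2 := F_curve S hαm hB hu (fun s => X (t - s) y) (fun s => - S.b (X (t - s) y))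
    (fun s => (hX.2.1 y (t - s)).comp_const_sub t s) t B ht
    (fun s hs => hyin _ (by linarith [hs.2]))
    (fun s hs => by rw [norm_neg]; exact hB _ (subset_closure (hyin _ (by linarith [hs.2]))))
  simp only [sub_self, sub_zero, hX.1] at h1 h2
  rw [abs_le]
  constructor <;> linarith

lemma flow_continuous
    (hX : GAS S.b X)
    {t : ℝ} (ht : 0 ≤ t) : Continuous (X t) := by
  obtain ⟨K, hb⟩ := S.b_lip
  have hlip : LipschitzWith (Real.toNNReal (Real.exp (K * t))) (X t) := by
    apply LipschitzWith.of_dist_le_mul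
    intro a c
    rw [dist_eq_norm, dist_eq_norm, Real.coe_toNNReal _ (Real.exp_pos _).le]
    exact flow_lip hb hX a c ht
  exact hlip.continuous

lemma flow_margin
    (hX : GAS S.b X)
    {t : ℝ} (ht : 0 < t) :
    ∃ d > (0:ℝ), ∀ x ∈ closure S.Ω, closedBall (X t x) d ⊆ S.Ω := by
  have hK : IsCompact (X t '' closure S.Ω) :=
    (isCompact_cl S).image (flow_continuous S hX ht.le)
  obtain ⟨d, hd, hsub⟩ := hK.exists_cthickening_subset_open (isOpen_Om S) (by
    rintro _ ⟨x, hx, rfl⟩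
    exact (flow_inv S hX hx).2 t ht)
  exact ⟨d, hd, fun x hx => (closedBall_subset_cthickening (mem_image_of_mem _ hx) d).trans hsub⟩

lemma F_equicont
    (hαm : ∀ x ∈ closure S.Ω, memS S.θ₀ (α x))
    (hB : ∀ x ∈ closure S.Ω, ‖S.b x‖ ≤ B)
    (hX : GAS S.b X)
    (ε : ℝ) (hε : 0 < ε) : ∃ δ > (0:ℝ), ∀ u, InF S α u → ∀ x ∈ closure S.Ω,
    ∀ y ∈ closure S.Ω, ‖x - y‖ < δ → |u x - u y| ≤ ε := by
  have hθ := S.θ₀_mem.1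
  have hB0 := B_nonneg S hB
  obtain ⟨K, hb⟩ := S.b_lip
  set C := B / S.θ₀ with hC
  have hC0 : 0 ≤ C := by positivity
  obtain ⟨t, ht, htε⟩ : ∃ t > (0:ℝ), C * B * t ≤ ε / 4 := by
    refine ⟨ε / (4 * (C * B + 1)), by positivity, ?_⟩
    rw [mul_div_assoc', div_le_div_iff₀ (by positivity) (by positivity)]
    nlinarith [mul_nonneg hC0 hB0]
  obtain ⟨d, hd, hdΩ⟩ := flow_margin S hX ht
  set e := Real.exp (K * t) with he
  have he0 : 0 < e := Real.exp_pos _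
  refine ⟨min (d / e) (ε / (2 * (C + 1) * e)), by positivity, ?_⟩
  have key : ∀ u, InF S α u → ∀ x ∈ closure S.Ω,
    ∀ y ∈ closure S.Ω, ‖x - y‖ < min (d / e) (ε / (2 * (C + 1) * e)) → u x - u y ≤ ε := by
    intro u hu x hx y hy hxy
    have h1 := abs_le.1 (F_flow S hαm hB hX hu hx ht.le)
    have h2 := abs_le.1 (F_flow S hαm hB hX hu hy ht.le)
    have h3 : ‖X t x - X t y‖ ≤ e * ‖x - y‖ := flow_lip hb hX x y ht.le
    have h4 : e * ‖x - y‖ ≤ d := by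
      have := hxy.le.trans (min_le_left _ _)
      rw [le_div_iff₀ he0] at this
      linarith
    have h5 : C * (e * ‖x - y‖) ≤ ε / 2 := by
      have := hxy.le.trans (min_le_right _ _)
      rw [le_div_iff₀ (by positivity)] at this
      nlinarith [mul_nonneg he0.le (norm_nonneg (x - y))]
    have h6 := F_seg S hαm hB hu (X t y) (X t x) (by
      intro s hs
      apply hdΩ y hy
      rw [mem_closedBall, dist_eq_norm, add_sub_cancel_left, norm_smul, Real.norm_eq_abs,
        abs_of_nonneg hs.1]
      nlinarith [hs.2, hs.1, norm_nonneg (X t x - X t y)])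
    have h7 : C * ‖X t x - X t y‖ ≤ C * (e * ‖x - y‖) := by gcongr
    linarith
  intro u hu x hx y hy hxy
  rw [abs_le]
  have h1 := key u hu x hx y hy hxy
  have h2 := key u hu y hy x hx (by rwa [norm_sub_rev])
  constructor <;> linarith

lemma F_bdd
    (hαm : ∀ x ∈ closure S.Ω, memS S.θ₀ (α x))
    (hB : ∀ x ∈ closure S.Ω, ‖S.b x‖ ≤ B)
    (hX : GAS S.b X)
    : ∃ M, ∀ u, InF S α u → ∀ x ∈ closure S.Ω, u x ≤ M := by
  obtain ⟨T, hT, hTe⟩ := flow_enter S hX S.r₀ S.r₀_pos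
  refine ⟨B / S.θ₀ * B * T + B / S.θ₀ * S.r₀, ?_⟩
  intro u hu x hx
  have h1 := abs_le.1 (F_flow S hαm hB hX hu hx hT.le)
  have h3 := hTe x hx T le_rfl
  have h2 := F_seg S hαm hB hu 0 (X T x) (by
    intro s hs
    apply S.ball_sub
    rw [mem_closedBall_zero_iff, zero_add, sub_zero, norm_smul, Real.norm_eq_abs,
      abs_of_nonneg hs.1]
    nlinarith [hs.2, hs.1, norm_nonneg (X T x)])
  rw [hu.2.1, sub_zero, sub_zero] at h2
  have h4 : B / S.θ₀ * ‖X T x‖ ≤ B / S.θ₀ * S.r₀ := by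
    have := S.θ₀_mem.1
    have := B_nonneg S hB
    gcongr
  linarith

lemma InF_zero : InF S α (fun _ => 0) := by
  refine ⟨⟨0, (LipschitzWith.const 0).lipschitzOnWith⟩, rfl, ?_⟩
  intro φ hφ x hx hmax
  have h1 : IsLocalMax (fun y => 0 - φ y) x := hmax.isLocalMax ((isOpen_Om S).mem_nhds hx)
  have h2 : IsLocalMin φ x := by
    filter_upwards [h1] with y hy
    linarith
  have h3 : gradient φ x = 0 := by
    rw [gradient, h2.fderiv_eq_zero, map_zero]
  rw [h3, Ham_eq]
  simp

lemma InF_max {u w : Eu n → ℝ} (hu : InF S α u) (hw : InF S α w) :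
    InF S α (fun x => max (u x) (w x)) := by
  obtain ⟨⟨L, hL⟩, hu0, hu⟩ := hu
  obtain ⟨⟨L', hL'⟩, hw0, hw⟩ := hw
  refine ⟨⟨max L L', ?_⟩, by simp [hu0, hw0], ?_⟩
  · rw [lipschitzOnWith_iff_restrict] at *
    exact hL.max hL'
  · intro φ hφ x hx hmax
    rcases le_total (u x) (w x) with h | h
    · apply hw φ hφ x hx
      filter_upwards [hmax] with y hy
      simp only [max_eq_right h] at hy
      linarith [le_max_right (u y) (w y)]
    · apply hu φ hφ x hx
      filter_upwards [hmax] with y hy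
      simp only [max_eq_left h] at hy
      linarith [le_max_left (u y) (w y)]

/-- Uniform approximation of the quasi-potential by a single subsolution. -/
lemma F_approx
    (hαm : ∀ x ∈ closure S.Ω, memS S.θ₀ (α x))
    (hB : ∀ x ∈ closure S.Ω, ‖S.b x‖ ≤ B)
    (hX : GAS S.b X)
    (ε : ℝ) (hε : 0 < ε) : ∃ u, InF S α u ∧
    ∀ x ∈ closure S.Ω, |u x - Vq α S.b S.Ω x| ≤ ε := by
  obtain ⟨M, hM⟩ := F_bdd S hαm hB hX
  set V := Vq α S.b S.Ω with hV
  have hbdd : ∀ x ∈ closure S.Ω, BddAbove {r | ∃ u : Eu n → ℝ,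
      (∃ K : NNReal, LipschitzOnWith K u (closure S.Ω)) ∧
      u 0 = 0 ∧ ViscSub (Ham α S.b) S.Ω u ∧ r = u x} := by
    intro x hx
    refine ⟨M, ?_⟩
    rintro _ ⟨u, h1, h2, h3, rfl⟩
    exact hM u ⟨h1, h2, h3⟩ x hx
  have hne : ∀ x, Set.Nonempty {r | ∃ u : Eu n → ℝ,
      (∃ K : NNReal, LipschitzOnWith K u (closure S.Ω)) ∧
      u 0 = 0 ∧ ViscSub (Ham α S.b) S.Ω u ∧ r = u x} := by
    intro x
    obtain ⟨h1, h2, h3⟩ := InF_zero S (α := α)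
    exact ⟨0, _, h1, h2, h3, rfl⟩
  have hle : ∀ u, InF S α u → ∀ x ∈ closure S.Ω, u x ≤ V x := by
    rintro u ⟨h1, h2, h3⟩ x hx
    exact le_csSup (hbdd x hx) ⟨u, h1, h2, h3, rfl⟩
  obtain ⟨δ, hδ, heq⟩ := F_equicont S hαm hB hX (ε / 3) (by positivity)
  have hfin : ∀ F : Finset (Eu n), (∀ x ∈ F, x ∈ closure S.Ω) →
      ∃ u, InF S α u ∧ ∀ x ∈ F, V x - ε / 3 ≤ u x := by
    classical
    intro F
    induction F using Finset.induction_on with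
    | empty => intro _; exact ⟨_, InF_zero S, by simp⟩
    | insert a F ha ih =>
      intro hF
      obtain ⟨u, hu, hu2⟩ := ih fun x hx => hF x (Finset.mem_insert_of_mem hx)
      have h1 : V a - ε / 3 < V a := by linarith
      obtain ⟨_, ⟨w, hw1, hw2, hw3, rfl⟩, hw⟩ := exists_lt_of_lt_csSup (hne a) h1
      refine ⟨_, InF_max S hu ⟨hw1, hw2, hw3⟩, ?_⟩
      intro x hx
      rcases Finset.mem_insert.1 hx with rfl | hx
      · exact hw.le.trans (le_max_right _ _)
      · exact (hu2 x hx).trans (le_max_left _ _)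
  obtain ⟨F, hF, hcov⟩ := (isCompact_cl S).elim_nhds_subcover
    (fun x => ball x δ) (fun x _ => ball_mem_nhds x hδ)
  obtain ⟨u, hu, hu2⟩ := hfin F hF
  refine ⟨u, hu, fun x hx => ?_⟩
  obtain ⟨a, ha, hxa⟩ := mem_iUnion₂.1 (hcov hx)
  rw [mem_ball, dist_eq_norm] at hxa
  have h1 := abs_le.1 (heq u hu x hx a (hF a ha) hxa)
  have h2 := hu2 a ha
  have h3 : V x ≤ V a + ε / 3 := by
    apply csSup_le (hne x)
    rintro _ ⟨w, hw1, hw2, hw3, rfl⟩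
    have h4 := abs_le.1 (heq w ⟨hw1, hw2, hw3⟩ x hx a (hF a ha) hxa)
    have h5 := hle w ⟨hw1, hw2, hw3⟩ a (hF a ha)
    linarith
  have h6 := hle u hu x hx
  rw [abs_le]
  constructor <;> linarith

end Sub

section Main

variable (S : SettingB n) {α : Eu n → Matrix (Fin n) (Fin n) ℝ}
  {B : ℝ} {X : ℝ → Eu n → Eu n}

/-- Segment inequality for subsolutions. -/
lemma F_dir
    (hαc : ContinuousOn α (closure S.Ω))
    (hαm : ∀ x ∈ closure S.Ω, memS S.θ₀ (α x))
    (hB : ∀ x ∈ closure S.Ω, ‖S.b x‖ ≤ B)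
    (R ε : ℝ) (hR : 0 ≤ R) (hε : 0 < ε) : ∃ δ > (0:ℝ), ∀ u, InF S α u →
    ∀ x ∈ closure S.Ω, ∀ q : Eu n, ‖q‖ ≤ R → ∀ y : Eu n, ∀ h ≥ (0:ℝ),
    closedBall y (h * ‖S.b x + (2:ℝ) • Aop (α x) q‖) ⊆ S.Ω ∩ ball x δ →
    u (y + h • (S.b x + (2:ℝ) • Aop (α x) q)) - u y ≤ h * (inner ℝ q (Aop (α x) q) + ε) := by
  obtain ⟨K, hb⟩ := S.b_lip
  have hθ := S.θ₀_mem.1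
  have hB0 := B_nonneg S hB
  set C := B / S.θ₀ with hC
  have hC0 : 0 ≤ C := by positivity
  have hAc : ContinuousOn (fun x => Aop (α x)) (closure S.Ω) := Aop_cont.comp_continuousOn hαc
  have hAu := (isCompact_cl S).uniformContinuousOn_of_continuous hAc
  rw [Metric.uniformContinuousOn_iff] at hAu
  set ω := ε / (2 * (2 * C * R + R ^ 2 + 1)) with hω
  have hω0 : 0 < ω := by positivity
  have hωε : ω * (2 * C * R + R ^ 2) ≤ ε / 2 := by
    have : ω * (2 * C * R + R ^ 2 + 1) = ε / 2 := by rw [hω]; field_simp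
    linarith
  obtain ⟨δA, hδA, hA⟩ := hAu ω hω0
  refine ⟨min δA (ε / (2 * (C * K + 1))), by positivity, ?_⟩
  intro u hu x hx q hq y h hh hsub
  set e := S.b x + (2:ℝ) • Aop (α x) q with he
  set δ := min δA (ε / (2 * (C * K + 1))) with hδ
  have hKδ : C * K * δ ≤ ε / 2 := by
    have h1 : δ ≤ ε / (2 * (C * K + 1)) := min_le_right _ _
    have h2 : 0 ≤ C * K := by positivity
    rw [le_div_iff₀ (by positivity)] at h1
    have : 0 ≤ δ := by positivity
    nlinarith
  obtain ⟨⟨L, hL⟩, -, hv⟩ := hu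
  have h := visc_curve (Ham α S.b) S.Ω (S.Ω ∩ ball x δ) ((isOpen_Om S).inter isOpen_ball)
    inter_subset_left u (hL.continuousOn.mono (inter_subset_left.trans subset_closure)) hv
    (fun s => y + s • e) (fun _ => e)
    (fun s => by simpa using ((hasDerivAt_id s).smul_const e).const_add y) h hh
    (fun s hs => by
      apply hsub
      rw [mem_closedBall, dist_eq_norm, add_sub_cancel_left, norm_smul, Real.norm_eq_abs,
        abs_of_nonneg hs.1]
      exact mul_le_mul_of_nonneg_right hs.2 (norm_nonneg _))
    (inner ℝ q (Aop (α x) q) + ε) ?_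
  · simp only [zero_smul, add_zero] at h
    linarith
  · rintro s - z ⟨hz, hzx⟩ p hp
    have hzc := subset_closure hz
    have hpC : ‖p‖ ≤ C := p_bound S hαm hB hzc hp
    have hY := Aop_young hθ.le (hαm z hzc) p q
    rw [Ham_eq] at hp
    rw [mem_ball] at hzx
    have hAz := hA z hzc x hx (hzx.trans_le (min_le_left _ _))
    rw [dist_eq_norm] at hAz
    have hbz := hb.dist_le_mul x z
    rw [dist_comm x z, dist_eq_norm] at hbz
    -- the three error terms
    have e1 : inner ℝ p (S.b x) - inner ℝ p (S.b z) ≤ C * K * δ := by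
      rw [← inner_sub_right]
      refine (real_inner_le_norm _ _).trans ?_
      have : ‖S.b x - S.b z‖ ≤ K * δ := hbz.trans (by gcongr)
      rw [mul_assoc]
      exact mul_le_mul hpC this (norm_nonneg _) hC0
    have hop : ∀ v w : Eu n, |inner ℝ v (Aop (α z) w) - inner ℝ v (Aop (α x) w)| ≤
        ω * (‖v‖ * ‖w‖) := by
      intro v w
      rw [← inner_sub_right, ← sub_apply]
      refine (abs_real_inner_le_norm _ _).trans ?_
      have h1 := (Aop (α z) - Aop (α x)).le_opNorm w
      have h2 : ‖(Aop (α z) - Aop (α x)) w‖ ≤ ω * ‖w‖ := h1.trans (by gcongr)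
      calc ‖v‖ * ‖(Aop (α z) - Aop (α x)) w‖ ≤ ‖v‖ * (ω * ‖w‖) := by gcongr
        _ = _ := by ring
    have e2 := abs_le.1 (hop p q)
    have e3 := abs_le.1 (hop q q)
    have n1 : ‖p‖ * ‖q‖ ≤ C * R := mul_le_mul hpC hq (norm_nonneg _) hC0
    have n2 : ‖q‖ * ‖q‖ ≤ R * R := mul_le_mul hq hq (norm_nonneg _) hR
    have n1' := mul_le_mul_of_nonneg_left n1 hω0.le
    have n2' := mul_le_mul_of_nonneg_left n2 hω0.le
    rw [he, inner_add_right, inner_smul_right]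
    nlinarith

lemma flow_move
    (hB : ∀ x ∈ closure S.Ω, ‖S.b x‖ ≤ B)
    (hX : GAS S.b X)
    {K : NNReal} (hb : LipschitzWith K S.b) {x y : Eu n} (hx : x ∈ closure S.Ω)
    {ε : ℝ} (hy : ‖y - x‖ ≤ ε)
    {s : ℝ} (hs : s ∈ Icc (0:ℝ) 1) : ‖X s y - y‖ ≤ (B + K * Real.exp K * ε) * s := by
  have h1 := flow_speed hX x B s hs.1 (fun r hr => hB _ ((flow_inv S hX hx).1 r hr.1))
  have h2 := flow_near hb hX y x hs
  have h3 : X s y - y = (X s x - x) + (X s y - X s x - (y - x)) := by abel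
  rw [h3]
  refine (norm_add_le _ _).trans ?_
  have h4 : K * Real.exp K * ‖y - x‖ * s ≤ K * Real.exp K * ε * s := by
    have := hs.1
    gcongr
  linarith

open intervalIntegral in
/-- Lipschitz Lyapunov function. -/
lemma lyap
    (hB : ∀ x ∈ closure S.Ω, ‖S.b x‖ ≤ B)
    (hX : GAS S.b X)
    (r : ℝ) (hr : 0 < r) : ∃ W : Eu n → ℝ, ∃ L : NNReal, LipschitzWith L W ∧
    ∃ C ≥ (0:ℝ), ∀ ε ∈ Ioc (0:ℝ) 1, ∀ x ∈ closure S.Ω, ∃ h₀ > (0:ℝ), ∀ y, ‖y - x‖ ≤ ε →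
      ∀ h ∈ Ioo 0 h₀, W (y + h • S.b x) - W y ≤ h * (- max 0 (‖x‖ - r / 2) + C * ε) := by
  obtain ⟨K, hb⟩ := S.b_lip
  have hB0 := B_nonneg S hB
  obtain ⟨T, hT, hTe⟩ := flow_enter S hX (r / 2) (by positivity)
  set φ : Eu n → ℝ := fun z => max 0 (‖z‖ - r / 2) with hφ
  have hφc : Continuous φ := by fun_prop
  have hφ0 : ∀ z, 0 ≤ φ z := fun z => le_max_left _ _
  have hφl : ∀ z w, φ z ≤ φ w + ‖z - w‖ := by
    intro z w
    apply max_le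
    · have := hφ0 w
      positivity
    · have h1 : ‖z‖ ≤ ‖w‖ + ‖z - w‖ := norm_le_norm_add_norm_sub' z w
      have h2 : ‖w‖ - r / 2 ≤ φ w := le_max_right _ _
      linarith
  have hfc : ∀ y, Continuous fun s => φ (X s y) := fun y => hφc.comp (flow_cont hX y)
  have hii : ∀ y a c, IntervalIntegrable (fun s => φ (X s y)) MeasureTheory.volume a c :=
    fun y a c => (hfc y).intervalIntegrable a c
  set W : Eu n → ℝ := fun y => ∫ s in (0:ℝ)..T, φ (X s y) with hW
  set L : ℝ := Real.exp (K * T) * T with hL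
  have hL0 : 0 ≤ L := by positivity
  have hWl : LipschitzWith (Real.toNNReal L) W := by
    apply LipschitzWith.of_dist_le_mul
    intro y z
    rw [Real.coe_toNNReal _ hL0, Real.dist_eq, dist_eq_norm, hW, ← integral_sub (hii _ _ _) (hii _ _ _)]
    have h1 := norm_integral_le_of_norm_le_const (a := 0) (b := T)
      (f := fun s => φ (X s y) - φ (X s z)) (C := Real.exp (K * T) * ‖y - z‖) ?_
    · rw [sub_zero, abs_of_pos hT] at h1
      refine h1.trans (le_of_eq ?_)
      rw [hL]; ring
    · intro s hs
      rw [uIoc_of_le hT.le] at hs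
      have h2 := flow_lip hb hX y z hs.1.le
      have h3 : Real.exp (K * s) * ‖y - z‖ ≤ Real.exp (K * T) * ‖y - z‖ := by
        gcongr
        exact hs.2
      have h4 := hφl (X s y) (X s z)
      have h5 := hφl (X s z) (X s y)
      rw [norm_sub_rev] at h5
      rw [Real.norm_eq_abs, abs_le]
      constructor <;> linarith
  set E := Real.exp (K * (T + 1)) with hE
  have hE0 : 0 < E := Real.exp_pos _
  refine ⟨W, Real.toNNReal L, hWl, E + 2 + L * (K * 2), by positivity, ?_⟩
  intro ε hε x hx
  have hε0 := hε.1
  set P := B + K * Real.exp K * ε with hP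
  have hP0 : 0 ≤ P := by positivity
  refine ⟨min 1 (ε / (P + 1)), by positivity, ?_⟩
  intro y hy h hh
  have hh1 : h ≤ 1 := hh.2.le.trans (min_le_left _ _)
  have hh2 : P * h ≤ ε := by
    have := hh.2.le.trans (min_le_right _ _)
    rw [le_div_iff₀ (by positivity)] at this
    linarith [hh.1]
  have hh0 := hh.1
  have hmove : ∀ s ∈ Icc 0 h, ‖X s y - x‖ ≤ 2 * ε := by
    intro s hs
    have h1 := flow_move S hB hX hb hx hy (s := s) ⟨hs.1, hs.2.trans hh1⟩
    have h2 : P * s ≤ P * h := by gcongr; exact hs.2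
    have h3 : X s y - x = (X s y - y) + (y - x) := by abel
    rw [h3]
    refine (norm_add_le _ _).trans ?_
    linarith
  -- W decays along the flow
  have hdec : W (X h y) - W y ≤ h * (- φ x + (E + 2) * ε) := by
    have h1 : W (X h y) = ∫ s in h..(T + h), φ (X s y) := by
      have h2 : W (X h y) = ∫ s in (0:ℝ)..T, φ (X (s + h) y) := by
        apply integral_congr
        intro s hs
        rw [uIcc_of_le hT.le] at hs
        simp only
        rw [flow_add hb hX y h hs.1]
      rw [h2, integral_comp_add_right (fun s => φ (X s y)) h, zero_add]
    have h3 := integral_add_adjacent_intervals (hii y 0 h) (hii y h (T + h))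
    have h4 := integral_add_adjacent_intervals (hii y 0 T) (hii y T (T + h))
    have h5 : ∫ s in T..(T + h), φ (X s y) ≤ E * ε * h := by
      have h6 := norm_integral_le_of_norm_le_const (a := T) (b := T + h)
        (f := fun s => φ (X s y)) (C := E * ε) ?_
      · rw [add_sub_cancel_left, abs_of_pos hh0] at h6
        exact (le_abs_self _).trans h6
      · intro s hs
        rw [uIoc_of_le (by linarith)] at hs
        rw [Real.norm_eq_abs, abs_of_nonneg (hφ0 _)]
        have h7 : φ (X s x) = 0 := max_eq_left (by linarith [hTe x hx s hs.1.le])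
        have h8 := hφl (X s y) (X s x)
        have h9 := flow_lip hb hX y x (t := s) (by linarith [hs.1])
        have h10 : Real.exp (K * s) * ‖y - x‖ ≤ E * ε := by
          rw [hE]
          gcongr
          linarith [hs.2]
        linarith
    have h11 : h * (φ x - 2 * ε) ≤ ∫ s in (0:ℝ)..h, φ (X s y) := by
      have h12 : h * (φ x - 2 * ε) = ∫ s in (0:ℝ)..h, (φ x - 2 * ε) := by
        rw [integral_const, sub_zero, smul_eq_mul]
      rw [h12]
      apply integral_mono_on hh0.le (by simp) (hii y 0 h)
      intro s hs
      have h13 := hφl x (X s y)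
      rw [norm_sub_rev] at h13
      linarith [hmove s hs]
    have h14 : W y = ∫ s in (0:ℝ)..T, φ (X s y) := rfl
    rw [h1, h14]
    linarith
  have hnear : ‖X h y - (y + h • S.b x)‖ ≤ K * (2 * ε) * h := by
    have h1 := norm_image_sub_le_of_norm_deriv_le_segment' (a := 0) (b := h)
      (f := fun s => X s y - s • S.b x) (f' := fun s => S.b (X s y) - S.b x)
      (C := K * (2 * ε))
      (fun s _ => by
        have h2 := (hX.2.1 y s).sub ((hasDerivAt_id s).smul_const (S.b x))
        rw [one_smul] at h2
        exact h2.hasDerivWithinAt) (fun s hs => ?_) h ⟨hh0.le, le_rfl⟩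
    · simp only [hX.1, zero_smul, sub_zero] at h1
      have h3 : X h y - (y + h • S.b x) = X h y - h • S.b x - y := by abel
      rw [h3]
      exact h1
    · have h4 := hb.dist_le_mul (X s y) x
      rw [dist_eq_norm, dist_eq_norm] at h4
      refine h4.trans ?_
      have := hmove s ⟨hs.1, hs.2.le⟩
      gcongr
  have hlast := hWl.dist_le_mul (y + h • S.b x) (X h y)
  rw [Real.coe_toNNReal _ hL0, Real.dist_eq, dist_comm, dist_eq_norm] at hlast
  have h1 := (le_abs_self _).trans hlast
  have h2 : L * ‖X h y - (y + h • S.b x)‖ ≤ L * (K * (2 * ε) * h) := by gcongr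
  change _ ≤ h * (- φ x + _)
  linarith

end Main

lemma ev_small (a A : ℝ) (hA : 0 < A) : ∀ᶠ δ in 𝓝[>] (0:ℝ), δ * a ≤ A := by
  have h : Tendsto (fun δ : ℝ => δ * a) (𝓝 0) (𝓝 0) := by
    have : Continuous fun δ : ℝ => δ * a := by fun_prop
    simpa using this.tendsto 0
  exact ((h.eventually_lt_const hA).mono fun _ h => h.le).filter_mono nhdsWithin_le_nhds

lemma ev_pos : ∀ᶠ δ in 𝓝[>] (0:ℝ), 0 < δ := self_mem_nhdsWithin

/-- Final algebraic step. -/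
lemma final_alg {κ θ c δ r Q a P : ℝ} (hκ : 0 < κ) (hθ : 0 < θ)
    (hδ : 0 < δ) (ha : θ * Q ^ 2 ≤ a) (hc : δ * c ^ 2 ≤ κ * θ * r / 8)
    {X : ℝ} (hX : P ≤ - κ * a + X + δ * (c * 2 * Q)) : P ≤ X + δ * r / 8 := by
  have hkt : 0 < κ * θ := by positivity
  have h1 : 2 * δ * c * Q ≤ κ * θ * Q ^ 2 + δ * r / 8 := by
    have h2 : 0 ≤ (κ * θ) * (κ * θ * Q ^ 2 + δ * r / 8 - 2 * δ * c * Q) := by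
      have h3 : (κ * θ) * (κ * θ * Q ^ 2 + δ * r / 8 - 2 * δ * c * Q) =
          (κ * θ * Q - δ * c) ^ 2 + δ * (κ * θ * r / 8 - δ * c ^ 2) := by ring
      rw [h3]
      have h4 : 0 ≤ δ * (κ * θ * r / 8 - δ * c ^ 2) := mul_nonneg hδ.le (by linarith)
      positivity
    have := nonneg_of_mul_nonneg_right h2 hkt
    linarith
  nlinarith

set_option maxHeartbeats 4000000 in
/-- Lemma 4.3: smooth approximation `v_r` of the quasi-potential `V_α`. -/
theorem stmt14 {n : ℕ} (S : SettingB n) (α : Eu n → Matrix (Fin n) (Fin n) ℝ)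
    (hαc : ContinuousOn α (closure S.Ω)) (hαm : ∀ x ∈ closure S.Ω, memS S.θ₀ (α x))
    (r : ℝ) (hr : r ∈ Set.Ioo 0 S.r₀) :
    ∃ v : Eu n → ℝ, ∃ η ∈ Set.Ioo (0:ℝ) 1,
      ContDiffOn ℝ 2 v (closure S.Ω) ∧
      (∀ x ∈ S.Ω \ ball (0 : Eu n) r, Ham α S.b x (gradient v x) ≤ -η) ∧
      (∀ x ∈ ball (0 : Eu n) r, Ham α S.b x (gradient v x) ≤ 1) ∧
      (∀ x ∈ closure S.Ω, |v x - Vq α S.b S.Ω x| < r) := by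
  obtain ⟨K, hb⟩ := S.b_lip
  obtain ⟨X, hX⟩ := S.b_gas
  obtain ⟨hr0, hrr⟩ := hr
  have hθ := S.θ₀_mem.1
  have hcl := isCompact_cl S
  obtain ⟨B, hB⟩ := hcl.exists_bound_of_continuousOn hb.continuous.continuousOn
  have hB0 := B_nonneg S hB
  have hAc : ContinuousOn (fun x => Aop (α x)) (closure S.Ω) := Aop_cont.comp_continuousOn hαc
  obtain ⟨Am, hAm⟩ := hcl.exists_bound_of_continuousOn hAc
  have h0cl : (0 : Eu n) ∈ closure S.Ω := subset_closure S.zero_mem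
  have hAm0 : 0 ≤ Am := (norm_nonneg _).trans (hAm 0 h0cl)
  obtain ⟨u, hu, huV⟩ := F_approx S hαm hB hX (r / 4) (by positivity)
  obtain ⟨Ku, hKu⟩ := hu.1
  obtain ⟨U, hU, hUe⟩ := hKu.extend_real
  obtain ⟨W, LW, hW, C, hC0, hWd⟩ := lyap S hB hX r hr0
  obtain ⟨Mu, hMu⟩ := hcl.exists_bound_of_continuousOn hKu.continuousOn
  obtain ⟨MW, hMW⟩ := hcl.exists_bound_of_continuousOn hW.continuous.continuousOn
  have hMu0 : 0 ≤ Mu := (norm_nonneg _).trans (hMu 0 h0cl)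
  have hMW0 : 0 ≤ MW := (norm_nonneg _).trans (hMW 0 h0cl)
  set eK : ℝ := Real.exp K with heK
  have heK0 : 0 < eK := Real.exp_pos _
  set RN : NNReal := Ku * Real.toNNReal eK + LW with hRN
  set R : ℝ := (↑RN : ℝ) with hR
  have hRe : R = Ku * eK + LW := by
    rw [hR, hRN]; push_cast; rw [Real.coe_toNNReal _ heK0.le]
  have hR0 : 0 ≤ R := RN.2
  set E : ℝ := B + 2 * (Am * R) with hE
  have hE0 : 0 ≤ E := by positivity
  -- constants
  obtain ⟨κ, hκ0, hκ1, hκ2⟩ := (ev_pos.and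
    ((ev_small 1 (1/2) (by norm_num)).and (ev_small Mu (r / 16) (by positivity)))).exists
  obtain ⟨δ, hδ0, hδ1, hδ2, hδ3, hδ4⟩ := (ev_pos.and ((ev_small 1 1 one_pos).and
    ((ev_small ((LW * Am) ^ 2) (κ * S.θ₀ * r / 8) (by positivity)).and
    ((ev_small MW (r / 16) (by positivity)).and (ev_small r 1 one_pos))))).exists
  obtain ⟨δ₁, hδ₁, hdir⟩ := F_dir S hαc hαm hB R (δ * r / 16) hR0 (by positivity)
  obtain ⟨t, ht0, ht1, ht2, ht3, ht4⟩ := (ev_pos.and ((ev_small 1 1 one_pos).and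
    ((ev_small (Ku * (K * eK * E)) (δ * r / 16) (by positivity)).and
    ((ev_small (Ku * B) (r / 16) (by positivity)).and
      (ev_small B (δ₁ / 4) (by positivity)))))).exists
  rw [mul_one] at hκ1 hδ1 ht1
  obtain ⟨d, hd0, hd⟩ := flow_margin S hX ht0
  obtain ⟨ε, hε0, hε1, hε2, hε3, hε4, hε5⟩ := (ev_pos.and ((ev_small 1 1 one_pos).and
    ((ev_small C (r / 16) (by positivity)).and
    ((ev_small eK (d / 2) (by positivity)).and
    ((ev_small eK (δ₁ / 4) (by positivity)).and (ev_small R (r / 16) (by positivity))))))).exists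
  rw [mul_one] at hε1
  have hexp : Real.exp (K * t) ≤ eK := by
    rw [heK]; gcongr; nlinarith [K.2]
  have hXl : ∀ y z, ‖X t y - X t z‖ ≤ eK * ‖y - z‖ := fun y z =>
    (flow_lip hb hX y z ht0.le).trans (by gcongr)
  -- the function to mollify
  set w : Eu n → ℝ := fun y => (1 - κ) * U (X t y) + δ * W y with hw
  have hUX : ∀ y z, |U (X t y) - U (X t z)| ≤ Ku * eK * ‖y - z‖ := by
    intro y z
    have h1 := hU.dist_le_mul (X t y) (X t z)
    rw [Real.dist_eq, dist_eq_norm] at h1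
    refine h1.trans ?_
    rw [mul_assoc]
    have := hXl y z
    gcongr
  have hWl : ∀ y z, |W y - W z| ≤ LW * ‖y - z‖ := by
    intro y z
    have h1 := hW.dist_le_mul y z
    rwa [Real.dist_eq, dist_eq_norm] at h1
  have hwl : LipschitzWith RN w := by
    apply LipschitzWith.of_dist_le_mul
    intro y z
    rw [Real.dist_eq, dist_eq_norm, ← hR, hRe]
    have h1 : w y - w z = (1 - κ) * (U (X t y) - U (X t z)) + δ * (W y - W z) := by
      rw [hw]; ring
    rw [h1]
    refine (abs_add_le _ _).trans ?_
    rw [abs_mul, abs_mul, abs_of_nonneg (by linarith : (0:ℝ) ≤ 1 - κ), abs_of_pos hδ0, add_mul]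
    have h2 := hUX y z
    have h3 := hWl y z
    have h4 : (1 - κ) * |U (X t y) - U (X t z)| ≤ |U (X t y) - U (X t z)| :=
      mul_le_of_le_one_left (abs_nonneg _) (by linarith)
    have h5 : δ * |W y - W z| ≤ |W y - W z| := mul_le_of_le_one_left (abs_nonneg _) hδ1
    linarith
  obtain ⟨v, hvC, hvw, hvd⟩ := mollify w RN hwl ε hε0
  -- gradient bound
  have hgrad : ∀ x, ‖gradient v x‖ ≤ R := by
    intro x
    set q := gradient v x with hq
    have h1 := hvd x q (R * ‖q‖) ⟨1, one_pos, fun y _ h hh => ?_⟩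
    · rw [← hq, real_inner_self_eq_norm_sq] at h1
      by_contra hcon
      push Not at hcon
      nlinarith
    · have h2 := hwl.dist_le_mul (y + h • q) y
      rw [Real.dist_eq, dist_eq_norm, add_sub_cancel_left, norm_smul, Real.norm_eq_abs,
        abs_of_pos hh.1] at h2
      have h3 := (le_abs_self _).trans h2
      rw [← hR] at h3
      linarith
  -- main estimate
  have hmain : ∀ x ∈ closure S.Ω, Ham α S.b x (gradient v x) ≤
      - δ * max 0 (‖x‖ - r / 2) + 3 * (δ * r / 16) + δ * r / 8 := by
    intro x hx
    have hqR := hgrad x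
    set q := gradient v x with hq
    set e := S.b x + (2:ℝ) • Aop (α x) q with he
    have hAq : ‖Aop (α x) q‖ ≤ Am * ‖q‖ :=
      ((Aop (α x)).le_opNorm q).trans (mul_le_mul_of_nonneg_right (hAm x hx) (norm_nonneg _))
    have hAq2 : ‖(2:ℝ) • Aop (α x) q‖ ≤ 2 * (Am * ‖q‖) := by
      rw [norm_smul, Real.norm_eq_abs, abs_of_pos two_pos]
      linarith
    have heE : ‖e‖ ≤ E := by
      refine (norm_add_le _ _).trans ?_
      have h1 : Am * ‖q‖ ≤ Am * R := by gcongr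
      linarith [hB x hx]
    set a := inner ℝ q (Aop (α x) q) with ha
    have haθ : S.θ₀ * ‖q‖ ^ 2 ≤ a := by
      rw [ha, inner_Aop]; exact ((hαm x hx).2 q).1
    obtain ⟨hW0, hhW0, hWdx⟩ := hWd ε ⟨hε0, hε1⟩ x hx
    obtain ⟨ha1, hha1⟩ : ∃ h₁ > (0:ℝ), ∀ h ∈ Ioo 0 h₁, h * ‖e‖ ≤ d / 2 ∧ h * ‖e‖ ≤ δ₁ / 4 := by
      have h1 := (ev_small ‖e‖ (d / 2) (by positivity)).and
        (ev_small ‖e‖ (δ₁ / 4) (by positivity))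
      obtain ⟨h₁, hh₁, hsub⟩ := mem_nhdsGT_iff_exists_Ioo_subset.1 h1
      exact ⟨h₁, hh₁, fun h hh => hsub hh⟩
    have hineq := hvd x e ((1 - κ) * (a + δ * r / 16 + δ * r / 16) +
      δ * (- max 0 (‖x‖ - r / 2) + C * ε + LW * (2 * (Am * ‖q‖))))
      ⟨min hW0 ha1, lt_min hhW0 hha1.1, fun y hy h hh => ?_⟩
    · rw [← hq, he, inner_add_right, inner_smul_right, ← ha] at hineq
      rw [Ham_eq, ← ha]
      refine final_alg (c := LW * Am) (Q := ‖q‖) (r := r) hκ0 hθ hδ0 haθ hδ2 ?_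
      have h1 : δ * (C * ε) ≤ δ * (r / 16) := by gcongr; linarith
      have h2 : 0 ≤ κ * (δ * r / 16) := by positivity
      nlinarith
    · have hhW : h ∈ Ioo 0 hW0 := ⟨hh.1, hh.2.trans_le (min_le_left _ _)⟩
      have hh0 := hh.1
      obtain ⟨hs1, hs2⟩ := hha1.2 h ⟨hh.1, hh.2.trans_le (min_le_right _ _)⟩
      -- W part
      have pW : W (y + h • e) - W y ≤
          h * (- max 0 (‖x‖ - r / 2) + C * ε + LW * (2 * (Am * ‖q‖))) := by
        have h1 := hWdx y hy h hhW
        have h2 := (abs_le.1 (hWl (y + h • e) (y + h • S.b x))).2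
        have h3 : y + h • e - (y + h • S.b x) = h • ((2:ℝ) • Aop (α x) q) := by
          rw [he, smul_add]; abel
        rw [h3, norm_smul, Real.norm_eq_abs, abs_of_pos hh0] at h2
        have h4 : LW * (h * ‖(2:ℝ) • Aop (α x) q‖) ≤ LW * (h * (2 * (Am * ‖q‖))) := by gcongr
        linarith
      -- u part
      have hzx : ‖X t y - X t x‖ ≤ ε * eK := by
        refine (hXl y x).trans ?_
        rw [mul_comm]
        gcongr
      have hxx : ‖X t x - x‖ ≤ B * t :=
        flow_speed hX x B t ht0.le (fun s hs => hB _ ((flow_inv S hX hx).1 s hs.1))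
      have hsub : closedBall (X t y) (h * ‖e‖) ⊆ S.Ω ∩ ball x δ₁ := by
        intro p hp
        rw [mem_closedBall, dist_eq_norm] at hp
        constructor
        · apply hd x hx
          rw [mem_closedBall, dist_eq_norm]
          have h1 : p - X t x = (p - X t y) + (X t y - X t x) := by abel
          rw [h1]
          refine (norm_add_le _ _).trans ?_
          linarith
        · rw [mem_ball, dist_eq_norm]
          have h1 : p - x = (p - X t y) + (X t y - X t x) + (X t x - x) := by abel
          rw [h1]
          refine (norm_add₃_le).trans_lt ?_
          linarith
      have h5 := hdir u hu x hx q hqR (X t y) h hh0.le hsub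
      rw [← he, ← ha] at h5
      have hm1 : X t y ∈ closure S.Ω :=
        subset_closure (hsub (mem_closedBall_self (by positivity))).1
      have hm2 : X t y + h • e ∈ closure S.Ω := by
        refine subset_closure (hsub ?_).1
        rw [mem_closedBall, dist_eq_norm, add_sub_cancel_left, norm_smul, Real.norm_eq_abs,
          abs_of_pos hh0]
      rw [hUe hm1, hUe hm2] at h5
      have h6 := hU.dist_le_mul (X t (y + h • e)) (X t y + h • e)
      rw [Real.dist_eq, dist_eq_norm] at h6
      have h7 := flow_near hb hX (y + h • e) y (t := t) ⟨ht0.le, ht1⟩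
      rw [add_sub_cancel_left, norm_smul, Real.norm_eq_abs, abs_of_pos hh0, sub_sub] at h7
      have h8 : (Ku : ℝ) * ‖X t (y + h • e) - (X t y + h • e)‖ ≤ h * (δ * r / 16) := by
        calc (Ku : ℝ) * ‖X t (y + h • e) - (X t y + h • e)‖
            ≤ Ku * (K * eK * (h * E) * t) := by
              refine mul_le_mul_of_nonneg_left (h7.trans ?_) Ku.2
              gcongr
          _ = h * (t * (Ku * (K * eK * E))) := by ring
          _ ≤ _ := by gcongr
      have pU : U (X t (y + h • e)) - U (X t y) ≤ h * (a + δ * r / 16 + δ * r / 16) := by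
        have h9 := (le_abs_self _).trans h6
        linarith
      have h10 := mul_le_mul_of_nonneg_left pU (by linarith : (0:ℝ) ≤ 1 - κ)
      have h11 := mul_le_mul_of_nonneg_left pW hδ0.le
      simp only [hw]
      linarith
  have hη : 0 < δ * r / 8 := by positivity
  refine ⟨v, δ * r / 16, ⟨by positivity, by linarith⟩, hvC.contDiffOn, ?_, ?_, ?_⟩
  · rintro x ⟨hx, hxr⟩
    have h1 := hmain x (subset_closure hx)
    rw [mem_ball_zero_iff, not_lt] at hxr
    have h2 : r / 2 ≤ max 0 (‖x‖ - r / 2) := le_max_of_le_right (by linarith)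
    have h3 := mul_le_mul_of_nonneg_left h2 hδ0.le
    linarith
  · intro x hx
    have hxΩ : x ∈ S.Ω := S.ball_sub (ball_subset_closedBall (ball_subset_ball hrr.le hx))
    have h1 := hmain x (subset_closure hxΩ)
    have h3 := mul_nonneg hδ0.le (le_max_left 0 (‖x‖ - r / 2))
    linarith
  · intro x hx
    have h1 := abs_le.1 (huV x hx)
    have h2 := abs_le.1 (hvw x)
    rw [← hR] at h2
    have h3 := abs_le.1 (hMW x hx)
    have hxt : X t x ∈ closure S.Ω := (flow_inv S hX hx).1 t ht0.le
    have h4 := hKu.dist_le_mul (X t x) hxt x hx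
    rw [Real.dist_eq, dist_eq_norm] at h4
    have h5 : ‖X t x - x‖ ≤ B * t :=
      flow_speed hX x B t ht0.le (fun s hs => hB _ ((flow_inv S hX hx).1 s hs.1))
    have h6 : (Ku : ℝ) * ‖X t x - x‖ ≤ Ku * (B * t) := by gcongr
    have h7 := abs_le.1 (h4.trans h6)
    have h8 := abs_le.1 (hMu (X t x) hxt)
    have h9 : w x = u (X t x) - κ * u (X t x) + δ * W x := by
      simp only [hw]; rw [← hUe hxt]; ring
    have h10 : |κ * u (X t x)| ≤ r / 16 := by
      rw [abs_mul, abs_of_pos hκ0]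
      exact (mul_le_mul_of_nonneg_left (hMu _ hxt) hκ0.le).trans hκ2
    have h11 : |δ * W x| ≤ r / 16 := by
      rw [abs_mul, abs_of_pos hδ0]
      exact (mul_le_mul_of_nonneg_left (hMW _ hx) hδ0.le).trans hδ3
    have h12 := abs_le.1 h10
    have h13 := abs_le.1 h11
    rw [abs_lt]
    constructor <;> linarith
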